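/- Let n ≥ 1 and let Ω ⊆ ℝⁿ be a bounded nonempty open set with boundary ∂Ω (the topological frontier). Let T : ℝⁿ → ℝ be continuous on the closure of Ω and differentiable at every point of ∂Ω. Let k > 0, let η : ℝⁿ → ℝ satisfy η(x) > 0 for all x ∈ ∂Ω, let T_e : ℝⁿ → ℝ, and let T₋ ≤ T₊ be real numbers with T₋ ≤ T_e(x) ≤ T₊ for all x ∈ ∂Ω. Assume the Robin boundary condition: for every x ∈ ∂Ω there exists a unit vector ν with the property that there is ε₀ > 0 such that x − εν ∈ Ω for all ε ∈ (0, ε₀), and k·(DT(x))(ν) = η(x)·(T_e(x) − T(x)). Assume further the boundary maximum and minimum principles: there exist points x₊, x₋ ∈ ∂Ω with T(y) ≤ T(x₊) and T(y) ≥ T(x₋) for all y in the closure of Ω. Then T₋ ≤ T(y) ≤ T₊ for all y in the closure of Ω. (A temperature field satisfying the heat equation with convective boundary conditions is bounded between the minimum and maximum of the external temperature.) -/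

import Mathlib

/-!
At a boundary point `x` the vector `-ν` points into `Ω`, hence lies in the positive tangent cone of
`closure Ω` at `x`. If `x` maximizes `T` over `closure Ω`, the derivative of `T` at `x` along `-ν` is
nonpositive, so the normal derivative along `ν` is nonnegative; the Robin condition with `k, η > 0`
then gives `T x ≤ Te x ≤ Tplus`. The minimum is symmetric.
-/

/-- A temperature field satisfying the Robin (convective heat transfer) boundary condition
`k·∂T/∂ν = η·(T_e − T)` on the boundary of a bounded open set, together with the boundary
maximum and minimum principles, is bounded between the minimum `T₋` and the maximum `T₊`
of the external temperature. -/
theorem temperature_bounds_robin_bc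
    (n : ℕ) (hn : 1 ≤ n) (Ω : Set (EuclideanSpace ℝ (Fin n)))
    (hΩo : IsOpen Ω) (hΩb : Bornology.IsBounded Ω) (hΩne : Ω.Nonempty)
    (T : EuclideanSpace ℝ (Fin n) → ℝ)
    (hTc : ContinuousOn T (closure Ω))
    (hTd : ∀ x ∈ frontier Ω, DifferentiableAt ℝ T x)
    (k : ℝ) (hk : 0 < k)
    (η : EuclideanSpace ℝ (Fin n) → ℝ) (hη : ∀ x ∈ frontier Ω, 0 < η x)
    (Te : EuclideanSpace ℝ (Fin n) → ℝ)
    (Tminus Tplus : ℝ) (hTmp : Tminus ≤ Tplus)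
    (hTe : ∀ x ∈ frontier Ω, Tminus ≤ Te x ∧ Te x ≤ Tplus)
    (hRobin : ∀ x ∈ frontier Ω, ∃ ν : EuclideanSpace ℝ (Fin n), ‖ν‖ = 1 ∧
      (∃ ε₀ > (0:ℝ), ∀ ε ∈ Set.Ioo (0:ℝ) ε₀, x - ε • ν ∈ Ω) ∧
      k * (fderiv ℝ T x) ν = η x * (Te x - T x))
    (hmax : ∃ xp ∈ frontier Ω, ∀ y ∈ closure Ω, T y ≤ T xp)
    (hmin : ∃ xm ∈ frontier Ω, ∀ y ∈ closure Ω, T xm ≤ T y) :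
    ∀ y ∈ closure Ω, Tminus ≤ T y ∧ T y ≤ Tplus := by
  have cone : ∀ (x ν : EuclideanSpace ℝ (Fin n)),
      (∃ ε₀ > (0:ℝ), ∀ ε ∈ Set.Ioo (0:ℝ) ε₀, x - ε • ν ∈ Ω) →
      -ν ∈ posTangentConeAt (closure Ω) x := by
    rintro x ν ⟨ε₀, hε₀, h⟩
    refine mem_posTangentConeAt_of_frequently_mem (Filter.Eventually.frequently ?_)
    filter_upwards [Ioo_mem_nhdsGT hε₀] with ε hε
    simpa [sub_eq_add_neg] using subset_closure (h ε hε)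
  obtain ⟨xp, hxp, hp⟩ := hmax
  obtain ⟨xm, hxm, hm⟩ := hmin
  have upper : T xp ≤ Te xp := by
    obtain ⟨ν, -, hν, hR⟩ := hRobin xp hxp
    have hd := IsLocalMaxOn.hasFDerivWithinAt_nonpos (IsMaxOn.localize hp)
      (hTd xp hxp).hasFDerivAt.hasFDerivWithinAt (cone xp ν hν)
    have hd' : 0 ≤ fderiv ℝ T xp ν := by simpa using hd
    have h := nonneg_of_mul_nonneg_right (hR ▸ mul_nonneg hk.le hd') (hη xp hxp)
    linarith
  have lower : Te xm ≤ T xm := by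
    obtain ⟨ν, -, hν, hR⟩ := hRobin xm hxm
    have hd := IsLocalMinOn.hasFDerivWithinAt_nonneg (IsMinOn.localize hm)
      (hTd xm hxm).hasFDerivAt.hasFDerivWithinAt (cone xm ν hν)
    have hd' : fderiv ℝ T xm ν ≤ 0 := by simpa using hd
    have h := nonpos_of_mul_nonpos_right (hR ▸ mul_nonpos_of_nonneg_of_nonpos hk.le hd') (hη xm hxm)
    linarith
  intro y hy
  exact ⟨(hTe xm hxm).1.trans (lower.trans (hm y hy)),
    (hp y hy).trans (upper.trans (hTe xp hxp).2)⟩
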